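/- Let M be a matrix in SL(3,ℤ) whose characteristic polynomial is irreducible over ℚ. Then the set of ς-reduced matrices integer conjugate to M is finite. -/

import Mathlib

/-- 3×3 integer matrices. -/
abbrev M3 : Type := Matrix (Fin 3) (Fin 3) ℤ

/-- Hessenberg complexity ς(M) = a21² · a32. -/
def HessComplexity (M : M3) : ℤ := (M 1 0) ^ 2 * (M 2 1)

/-- A perfect (upper) Hessenberg matrix: a31 = 0, 0 ≤ a11 < a21, 0 ≤ a12 < a32,
0 ≤ a22 < a32. -/
def IsPerfectHessenberg (M : M3) : Prop :=
  M 2 0 = 0 ∧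
  0 ≤ M 0 0 ∧ M 0 0 < M 1 0 ∧
  0 ≤ M 0 1 ∧ M 0 1 < M 2 1 ∧
  0 ≤ M 1 1 ∧ M 1 1 < M 2 1

/-- M₂ = X · M₁ · X⁻¹ for some X ∈ GL(3,ℤ). -/
def IntegerConjugate (M₁ M₂ : M3) : Prop :=
  ∃ X : M3, (X.det = 1 ∨ X.det = -1) ∧ M₂ = X * M₁ * X⁻¹

/-- A ς-reduced matrix: a perfect Hessenberg SL(3,ℤ)-matrix whose Hessenberg
complexity is minimal in its integer conjugacy class. -/
def SigmaReduced (M : M3) : Prop :=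
  M.det = 1 ∧ IsPerfectHessenberg M ∧
  ∀ M' : M3, M'.det = 1 → IsPerfectHessenberg M' → IntegerConjugate M M' →
    HessComplexity M ≤ HessComplexity M'

/-!
For a Hessenberg matrix `A` of size `n + 1` over a domain, with nonzero subdiagonal, the vector
`A ^ n e₀` has a nonzero last coordinate, while `e₀, A e₀, …, A ^ n e₀` depend only on the first `n`
columns of `A`. By Cayley–Hamilton, `A (A ^ n e₀)` is then determined by these columns and the
characteristic polynomial, which recovers the last column. A perfect Hessenberg matrix has its first
two columns bounded by its complexity, so only finitely many such matrices share a given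
characteristic polynomial and a given bound on the complexity. All `ς`-reduced matrices of one
integer conjugacy class share both.
-/

section UpperHessenberg

variable {n : ℕ} {R : Type*} [CommRing R]

/-- Upper Hessenberg matrices of arbitrary size: all entries below the first subdiagonal vanish. -/
def IsUpperHessenberg (A : Matrix (Fin n) (Fin n) R) : Prop :=
  ∀ i j : Fin n, (j : ℕ) + 1 < i → A i j = 0

variable {A B : Matrix (Fin (n + 1)) (Fin (n + 1)) R}

theorem IsUpperHessenberg.pow_apply_zero_eq_zero (hA : IsUpperHessenberg A) {k : ℕ}
    {i : Fin (n + 1)} (hki : k < i) : (A ^ k) i 0 = 0 := by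
  induction k generalizing i with
  | zero => exact Matrix.one_apply_ne (Fin.pos_iff_ne_zero.mp hki)
  | succ k ih =>
    rw [pow_succ', Matrix.mul_apply]
    refine Finset.sum_eq_zero fun j _ ↦ ?_
    rcases lt_or_ge k (j : ℕ) with hkj | hjk
    · rw [ih hkj, mul_zero]
    · rw [hA i j (by lia), zero_mul]

theorem IsUpperHessenberg.pow_succ_apply_succ_zero (hA : IsUpperHessenberg A) (i : Fin n) :
    (A ^ ((i : ℕ) + 1)) i.succ 0 = A i.succ i.castSucc * (A ^ (i : ℕ)) i.castSucc 0 := by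
  rw [pow_succ', Matrix.mul_apply]
  refine Finset.sum_eq_single_of_mem i.castSucc (Finset.mem_univ _) fun j _ hji ↦ ?_
  rcases lt_or_gt_of_ne hji with hlt | hgt
  · rw [hA i.succ j (Nat.succ_lt_succ hlt), zero_mul]
  · have hij : (i : ℕ) < j := hgt
    rw [hA.pow_apply_zero_eq_zero hij, mul_zero]

theorem IsUpperHessenberg.pow_self_apply_zero_ne_zero [IsDomain R] (hA : IsUpperHessenberg A)
    (hsub : ∀ i : Fin n, A i.succ i.castSucc ≠ 0) (i : Fin (n + 1)) :
    (A ^ (i : ℕ)) i 0 ≠ 0 := by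
  induction i using Fin.induction with
  | zero => simp
  | succ i ih =>
    rw [Fin.val_succ, hA.pow_succ_apply_succ_zero]
    exact mul_ne_zero (hsub i) ih

theorem IsUpperHessenberg.pow_apply_zero_eq_of_le (hA : IsUpperHessenberg A)
    (hcol : ∀ i (j : Fin n), A i j.castSucc = B i j.castSucc) {k : ℕ} (hk : k ≤ n)
    (i : Fin (n + 1)) : (A ^ k) i 0 = (B ^ k) i 0 := by
  induction k generalizing i with
  | zero => simp only [pow_zero]
  | succ k ih =>
    have ih_col (j : Fin (n + 1)) : (A ^ k) j 0 = (B ^ k) j 0 := ih (Nat.le_of_succ_le hk) j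
    have last_eq_zero : (A ^ k) (Fin.last n) 0 = 0 := hA.pow_apply_zero_eq_zero hk
    simp only [pow_succ', Matrix.mul_apply, Fin.sum_univ_castSucc, hcol, ← ih_col, last_eq_zero,
      mul_zero]

theorem IsUpperHessenberg.pow_apply_zero_eq (hA : IsUpperHessenberg A)
    (hcol : ∀ i (j : Fin n), A i j.castSucc = B i j.castSucc)
    (hchar : A.charpoly = B.charpoly) (k : ℕ) (i : Fin (n + 1)) :
    (A ^ k) i 0 = (B ^ k) i 0 := by
  nontriviality R
  have hdeg : (Polynomial.X ^ k %ₘ B.charpoly).natDegree < n + 1 := by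
    have hdim : B.charpoly.natDegree = n + 1 := by
      rw [Matrix.charpoly_natDegree_eq_dim, Fintype.card_fin]
    have hne : B.charpoly ≠ 1 := by
      intro h
      simp [h] at hdim
    simpa only [hdim] using Polynomial.natDegree_modByMonic_lt _ B.charpoly_monic hne
  rw [A.pow_eq_aeval_mod_charpoly, B.pow_eq_aeval_mod_charpoly, hchar,
    Polynomial.aeval_eq_sum_range' hdeg, Polynomial.aeval_eq_sum_range' hdeg]
  simp only [Matrix.sum_apply, Matrix.smul_apply]
  refine Finset.sum_congr rfl fun m hm ↦ ?_
  rw [hA.pow_apply_zero_eq_of_le hcol (Nat.le_of_lt_succ (Finset.mem_range.mp hm))]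

theorem IsUpperHessenberg.eq_of_charpoly_eq [IsDomain R] (hA : IsUpperHessenberg A)
    (hsub : ∀ i : Fin n, A i.succ i.castSucc ≠ 0)
    (hcol : ∀ i (j : Fin n), A i j.castSucc = B i j.castSucc)
    (hchar : A.charpoly = B.charpoly) : A = B := by
  have hpow := hA.pow_apply_zero_eq hcol hchar
  have last_ne_zero : (A ^ n) (Fin.last n) 0 ≠ 0 :=
    hA.pow_self_apply_zero_ne_zero hsub (Fin.last n)
  have hlast (i : Fin (n + 1)) : A i (Fin.last n) = B i (Fin.last n) := by
    have hmul : (A * A ^ n) i 0 = (B * B ^ n) i 0 := by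
      simpa only [pow_succ'] using hpow (n + 1) i
    simp only [Matrix.mul_apply, Fin.sum_univ_castSucc, hcol, ← hpow n] at hmul
    exact mul_right_cancel₀ last_ne_zero (add_left_cancel hmul)
  ext i j
  exact Fin.lastCases (hlast i) (hcol i) j

end UpperHessenberg

namespace IsPerfectHessenberg

variable {A : M3}

theorem isUpperHessenberg (hA : IsPerfectHessenberg A) : IsUpperHessenberg A := by
  intro i j hij
  obtain ⟨rfl, rfl⟩ : i = 2 ∧ j = 0 := by lia
  exact hA.1

theorem subdiag_pos (hA : IsPerfectHessenberg A) (i : Fin 2) : 0 < A i.succ i.castSucc := by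
  obtain ⟨-, h00, h00', h01, h01', -⟩ := hA
  fin_cases i
  · exact h00.trans_lt h00'
  · exact h01.trans_lt h01'

theorem subdiag_le_hessComplexity (hA : IsPerfectHessenberg A) (i : Fin 2) :
    A i.succ i.castSucc ≤ HessComplexity A := by
  have h10 : 0 < A 1 0 := hA.subdiag_pos 0
  have h21 : 0 < A 2 1 := hA.subdiag_pos 1
  fin_cases i
  · calc
      A 1 0 ≤ A 1 0 ^ 2 := Int.le_self_sq _
      _ ≤ A 1 0 ^ 2 * A 2 1 := le_mul_of_one_le_right (sq_nonneg _) h21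
  · exact le_mul_of_one_le_left h21.le (one_le_pow₀ h10)

theorem apply_castSucc_mem_Icc (hA : IsPerfectHessenberg A) (i : Fin 3) (j : Fin 2) :
    A i j.castSucc ∈ Set.Icc 0 (HessComplexity A) := by
  have h10 : A 1 0 ≤ HessComplexity A := hA.subdiag_le_hessComplexity 0
  have h21 : A 2 1 ≤ HessComplexity A := hA.subdiag_le_hessComplexity 1
  obtain ⟨h20, h00, h00', h01, h01', h11, h11'⟩ := hA
  fin_cases i <;> fin_cases j <;> constructor <;> dsimp <;> lia

end IsPerfectHessenberg

theorem finite_setOf_isPerfectHessenberg_charpoly_eq_hessComplexity_le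
    (p : Polynomial ℤ) (c : ℤ) :
    {A : M3 | IsPerfectHessenberg A ∧ A.charpoly = p ∧ HessComplexity A ≤ c}.Finite := by
  let firstColumns (A : M3) (i : Fin 3) (j : Fin 2) : ℤ := A i j.castSucc
  refine Set.Finite.of_injOn (f := firstColumns) (t := Set.Icc 0 fun _ _ ↦ c) ?_ ?_
    (Set.finite_Icc _ _)
  · rintro A ⟨hA, -, hAc⟩
    exact ⟨fun i j ↦ (hA.apply_castSucc_mem_Icc i j).1,
      fun i j ↦ (hA.apply_castSucc_mem_Icc i j).2.trans hAc⟩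
  · rintro A ⟨hA, hAp, -⟩ B ⟨-, hBp, -⟩ hAB
    exact hA.isUpperHessenberg.eq_of_charpoly_eq (fun i ↦ (hA.subdiag_pos i).ne')
      (fun i j ↦ congrFun₂ hAB i j) (hAp.trans hBp.symm)

theorem integerConjugate_iff_isConj {A B : M3} : IntegerConjugate A B ↔ IsConj A B := by
  constructor
  · rintro ⟨X, hX, rfl⟩
    have hdet : IsUnit X.det := Int.isUnit_iff.mpr hX
    exact ⟨X.nonsingInvUnit hdet, (X.nonsing_inv_mul_cancel_right (X * A) hdet).symm⟩
  · rintro ⟨X, hX⟩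
    refine ⟨X, Int.isUnit_iff.mp (Matrix.isUnits_det_units X), ?_⟩
    rw [hX.eq, ← Matrix.coe_units_inv, Units.mul_inv_cancel_right]

namespace IntegerConjugate

variable {A B C : M3}

theorem symm (h : IntegerConjugate A B) : IntegerConjugate B A :=
  integerConjugate_iff_isConj.mpr (integerConjugate_iff_isConj.mp h).symm

theorem trans (hAB : IntegerConjugate A B) (hBC : IntegerConjugate B C) : IntegerConjugate A C :=
  integerConjugate_iff_isConj.mpr <|
    (integerConjugate_iff_isConj.mp hAB).trans (integerConjugate_iff_isConj.mp hBC)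

theorem charpoly_eq (h : IntegerConjugate A B) : A.charpoly = B.charpoly := by
  obtain ⟨X, hX⟩ := integerConjugate_iff_isConj.mp h
  rw [← Matrix.charpoly_units_conj X A, hX.eq,
    Matrix.mul_nonsing_inv_cancel_right _ _ (Matrix.isUnits_det_units X)]

end IntegerConjugate

theorem SigmaReduced.hessComplexity_eq {A B : M3} (hA : SigmaReduced A) (hB : SigmaReduced B)
    (hAB : IntegerConjugate A B) : HessComplexity A = HessComplexity B := by
  obtain ⟨hAdet, hAperfect, hAmin⟩ := hA
  obtain ⟨hBdet, hBperfect, hBmin⟩ := hB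
  exact (hAmin B hBdet hBperfect hAB).antisymm (hBmin A hAdet hAperfect hAB.symm)

theorem sigma_reduced_representatives_finite_general (M : M3) :
    {M' : M3 | IntegerConjugate M M' ∧ SigmaReduced M'}.Finite := by
  rcases Set.eq_empty_or_nonempty {M' : M3 | IntegerConjugate M M' ∧ SigmaReduced M'} with
    hempty | ⟨N, hMN, hN⟩
  · rw [hempty]
    exact Set.finite_empty
  · refine (finite_setOf_isPerfectHessenberg_charpoly_eq_hessComplexity_le
      M.charpoly (HessComplexity N)).subset ?_
    rintro A ⟨hMA, hA⟩
    have hAN : HessComplexity A = HessComplexity N := hA.hessComplexity_eq hN (hMA.symm.trans hMN)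
    exact ⟨hA.2.1, hMA.charpoly_eq.symm, hAN.le⟩

/-- For an SL(3,ℤ)-matrix with characteristic polynomial irreducible over ℚ, the
set of ς-reduced matrices integer conjugate to it is finite. -/
theorem sigma_reduced_representatives_finite (M : M3) (hdet : M.det = 1)
    (hirr : Irreducible (M.charpoly.map (Int.castRingHom ℚ))) :
    {M' : M3 | IntegerConjugate M M' ∧ SigmaReduced M'}.Finite :=
  sigma_reduced_representatives_finite_general M
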